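/- arXiv:1603.06688 — 3 statements merged into one kernel-verified Lean document; each statement's English description precedes it below -/
import Mathlib

section
/- Fix n ≥ 1 and a symmetric matrix B ∈ ℝ^{n×n}. Define H_L : ℝⁿ × ℝⁿ × ℝⁿ → ℝ by H_L(δ, E''_d, E''_q) := −(1/4)·Σ_{i=1}^n Σ_{k=1}^n B_{ik}·[2(E''_{di}E''_{qk} − E''_{dk}E''_{qi}) sin δ_{ik} − 2(E''_{di}E''_{dk} + E''_{qi}E''_{qk}) cos δ_{ik} + (E''_{di})² + (E''_{dk})² + (E''_{qi})² + (E''_{qk})²], where δ_{ik} := δ_i − δ_k. Then for every i, the partial derivative of H_L with respect to δ_i equals the electrical power P_{ei} := −Σ_{k=1}^n B_{ik}[(E''_{di}E''_{dk} + E''_{qi}E''_{qk}) sin δ_{ik} + (E''_{di}E''_{qk} − E''_{qi}E''_{dk}) cos δ_{ik}]. -/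
open Matrix Real

/-- Total energy stored in the purely inductive transmission lines of an
`n`-machine power network with symmetric susceptance matrix `B` (the factor `1/4`
accounts for each unordered pair being counted twice in the double sum). -/
noncomputable def HL {n : ℕ} (B : Matrix (Fin n) (Fin n) ℝ)
    (δ Ed Eq : Fin n → ℝ) : ℝ :=
  -(1 / 4) * ∑ i, ∑ k, B i k *
    (2 * (Ed i * Eq k - Ed k * Eq i) * Real.sin (δ i - δ k)
      - 2 * (Ed i * Ed k + Eq i * Eq k) * Real.cos (δ i - δ k)
      + Ed i ^ 2 + Ed k ^ 2 + Eq i ^ 2 + Eq k ^ 2)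

/-!
The energy is a sum, over ordered pairs of nodes, of functions of the angle difference
`δ_a - δ_b`, so `δ_i` enters only through row `i` and, with the opposite sign, through column `i`.
The derivative of the `(a, b)` term is, up to a constant, the power leaving `a` towards `b`, which
is the opposite of the power leaving `b` towards `a` because `B` is symmetric; hence row and column
contribute equally, which cancels the double counting of lines.
-/

section PairwiseSums

variable {ι : Type*} [Fintype ι] [DecidableEq ι]

theorem sum_sum_single_sub_single_smul {R M : Type*} [Ring R] [AddCommGroup M] [Module R M]
    (i : ι) (g : ι → ι → M) :
    ∑ a, ∑ b, ((Pi.single i 1 : ι → R) a - (Pi.single i 1 : ι → R) b) • g a b =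
      ∑ k, g i k - ∑ k, g k i := by
  simp [sub_smul, Pi.single_apply, Finset.sum_sub_distrib, ite_smul, Finset.sum_ite_irrel]

variable {𝕜 E : Type*} [NontriviallyNormedField 𝕜] [NormedAddCommGroup E] [NormedSpace 𝕜 E]
  {f : ι → ι → 𝕜 → E} {f' : ι → ι → E} {x : ι → 𝕜}

theorem hasDerivAt_sum_sum_update_sub (hf : ∀ a b, HasDerivAt (f a b) (f' a b) (x a - x b))
    (i : ι) :
    HasDerivAt (fun t => ∑ a, ∑ b, f a b (Function.update x i t a - Function.update x i t b))
      (∑ k, f' i k - ∑ k, f' k i) (x i) := by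
  have hcoord : ∀ a, HasDerivAt (fun t => Function.update x i t a)
      ((Pi.single i 1 : ι → 𝕜) a) (x i) :=
    hasDerivAt_pi.1 (hasDerivAt_update x i (x i))
  have hterm : ∀ a b, HasDerivAt
      (fun t => f a b (Function.update x i t a - Function.update x i t b))
      (((Pi.single i 1 : ι → 𝕜) a - (Pi.single i 1 : ι → 𝕜) b) • f' a b) (x i) := fun a b =>
    (hf a b).scomp_of_eq (x i) ((hcoord a).fun_sub (hcoord b))
      (by simp only [Function.update_eq_self])
  rw [← sum_sum_single_sub_single_smul (R := 𝕜)]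
  exact HasDerivAt.fun_sum fun a _ => HasDerivAt.fun_sum fun b _ => hterm a b

theorem hasDerivAt_sum_sum_update_sub_of_antisymm
    (hf : ∀ a b, HasDerivAt (f a b) (f' a b) (x a - x b)) (hf' : ∀ a b, f' b a = -f' a b)
    (i : ι) :
    HasDerivAt (fun t => ∑ a, ∑ b, f a b (Function.update x i t a - Function.update x i t b))
      ((2 : 𝕜) • ∑ k, f' i k) (x i) := by
  refine (hasDerivAt_sum_sum_update_sub hf i).congr_deriv ?_
  simp only [hf' i, Finset.sum_neg_distrib, sub_neg_eq_add, two_smul]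

end PairwiseSums

section Lines

variable {ι : Type*} (B : Matrix ι ι ℝ) (Ed Eq : ι → ℝ)

/-- The energy stored in the line between nodes `i` and `k`, as a function of the angle difference
`φ = δ_i - δ_k`. The factor is `1/2` rather than the `1/4` of `HL`, where every line occurs
twice. -/
noncomputable def lineEnergy (i k : ι) (φ : ℝ) : ℝ :=
  -(1 / 2) * (B i k *
    (2 * (Ed i * Eq k - Ed k * Eq i) * sin φ - 2 * (Ed i * Ed k + Eq i * Eq k) * cos φ
      + Ed i ^ 2 + Ed k ^ 2 + Eq i ^ 2 + Eq k ^ 2))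

/-- The power flowing out of node `i` into the line towards node `k`, as a function of the angle
difference `φ = δ_i - δ_k`. The electrical power `P_{ei}` is the sum of these over `k`. -/
noncomputable def linePower (i k : ι) (φ : ℝ) : ℝ :=
  -(B i k * ((Ed i * Ed k + Eq i * Eq k) * sin φ + (Ed i * Eq k - Eq i * Ed k) * cos φ))

theorem hasDerivAt_lineEnergy (i k : ι) (φ : ℝ) :
    HasDerivAt (lineEnergy B Ed Eq i k) (linePower B Ed Eq i k φ) φ := by
  have hsin := (hasDerivAt_sin φ).const_mul (2 * (Ed i * Eq k - Ed k * Eq i))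
  have hcos := (hasDerivAt_cos φ).const_mul (2 * (Ed i * Ed k + Eq i * Eq k))
  have hbracket := ((((hsin.fun_sub hcos).add_const (Ed i ^ 2)).add_const (Ed k ^ 2)).add_const
    (Eq i ^ 2)).add_const (Eq k ^ 2)
  refine ((hbracket.const_mul (B i k)).const_mul (-(1 / 2))).congr_deriv ?_
  simp only [linePower]
  ring

variable {B} in
theorem linePower_swap_neg (hB : B.IsSymm) (i k : ι) (φ : ℝ) :
    linePower B Ed Eq k i (-φ) = -linePower B Ed Eq i k φ := by
  simp only [linePower, hB.apply i k, sin_neg, cos_neg]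
  ring

end Lines

theorem HL_eq_half_sum_lineEnergy {n : ℕ} (B : Matrix (Fin n) (Fin n) ℝ) (δ Ed Eq : Fin n → ℝ) :
    HL B δ Ed Eq = (1 / 2) * ∑ i, ∑ k, lineEnergy B Ed Eq i k (δ i - δ k) := by
  simp only [HL, lineEnergy, ← Finset.mul_sum]
  ring

/-- The partial derivative of the line energy `H_L` with respect to the rotor
angle `δ_i` equals the electrical power `P_{ei}` produced at node `i`. -/
theorem stmt_7 (n : ℕ) (hn : 1 ≤ n) (B : Matrix (Fin n) (Fin n) ℝ) (hB : B.IsSymm)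
    (δ Ed Eq : Fin n → ℝ) (i : Fin n) :
    HasDerivAt (fun t : ℝ => HL B (Function.update δ i t) Ed Eq)
      (-(∑ k, B i k *
        ((Ed i * Ed k + Eq i * Eq k) * Real.sin (δ i - δ k)
          + (Ed i * Eq k - Eq i * Ed k) * Real.cos (δ i - δ k))))
      (δ i) := by
  have hswap : ∀ a b, linePower B Ed Eq b a (δ b - δ a) = -linePower B Ed Eq a b (δ a - δ b) :=
    fun a b => by rw [← neg_sub, linePower_swap_neg Ed Eq hB]
  have hsum := hasDerivAt_sum_sum_update_sub_of_antisymm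
    (fun a b => hasDerivAt_lineEnergy B Ed Eq a b (δ a - δ b)) hswap i
  simp only [HL_eq_half_sum_lineEnergy, ← Finset.sum_neg_distrib]
  refine (hsum.const_mul (1 / 2)).congr_deriv ?_
  rw [smul_eq_mul, one_div, inv_mul_cancel_left₀ two_ne_zero]
  simp only [linePower]
end

section
/- Fix n ≥ 1 and a symmetric matrix B ∈ ℝ^{n×n}, and set B_{ii} := Σ_{k≠i} B_{ik}. Define H_L : ℝⁿ × ℝⁿ × ℝⁿ → ℝ by H_L(δ, E''_d, E''_q) := −(1/4)·Σ_{i=1}^n Σ_{k=1}^n B_{ik}·[2(E''_{di}E''_{qk} − E''_{dk}E''_{qi}) sin δ_{ik} − 2(E''_{di}E''_{dk} + E''_{qi}E''_{qk}) cos δ_{ik} + (E''_{di})² + (E''_{dk})² + (E''_{qi})² + (E''_{qk})²], where δ_{ik} := δ_i − δ_k. Then for every i: (a) the partial derivative of H_L with respect to E''_{qi} equals −I_{di}, and (b) the partial derivative of H_L with respect to E''_{di} equals I_{qi}, where I_{di} := B_{ii}E''_{qi} − Σ_{k≠i} B_{ik}(E''_{dk} sin δ_{ik} + E''_{qk} cos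 δ_{ik}) and I_{qi} := −B_{ii}E''_{di} − Σ_{k≠i} B_{ik}(E''_{qk} sin δ_{ik} − E''_{dk} cos δ_{ik}). -/
/-!
Referred to a common frame, the voltages become the complex numbers
`V i = exp (δ i * I) * (Eq i + Ed i * I)`, and the bracket in `HL` is `‖V i - V k‖ ^ 2`: the line
energy is minus a Dirichlet energy on the network graph. For symmetric `B`, summation by parts
shows that the gradient of a Dirichlet energy is the graph Laplacian of `V`. By the network
equations this Laplacian is `-I` times the injected current phasor in the common frame, so that
`d HL = ∑ i, (Iq i * d(Ed i) - Id i * d(Eq i))`, whose coefficients are the partial derivatives.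
-/

open Matrix Real Finset

open scoped InnerProductSpace

section Dirichlet

variable {ι E : Type*} [Fintype ι] [NormedAddCommGroup E] [InnerProductSpace ℝ E]

/-- Dirichlet energy of a vector-valued function `V` on a graph with edge weights `B`. The sum is
over ordered pairs, so each edge contributes `‖V i - V k‖ ^ 2 / 2` times its weight. -/
noncomputable def dirichletEnergy (B : Matrix ι ι ℝ) (V : ι → E) : ℝ :=
  1 / 4 * ∑ i, ∑ k, B i k * ‖V i - V k‖ ^ 2

/-- Graph Laplacian of a vector-valued function `V` on a graph with edge weights `B`; the term
`k = i` vanishes, so loops do not count. -/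
def weightedLaplacian (B : Matrix ι ι ℝ) (V : ι → E) (i : ι) : E :=
  ∑ k, B i k • (V i - V k)

lemma sum_inner_weightedLaplacian {B : Matrix ι ι ℝ} (hB : B.IsSymm) (V W : ι → E) :
    ∑ i, ⟪weightedLaplacian B V i, W i⟫_ℝ =
      1 / 2 * ∑ i, ∑ k, B i k * ⟪V i - V k, W i - W k⟫_ℝ := by
  have expand : ∑ i, ⟪weightedLaplacian B V i, W i⟫_ℝ =
      ∑ i, ∑ k, B i k * ⟪V i - V k, W i⟫_ℝ := by
    simp only [weightedLaplacian, sum_inner, real_inner_smul_left]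
  have swap : ∑ i, ∑ k, B i k * ⟪V i - V k, W k⟫_ℝ =
      -∑ i, ∑ k, B i k * ⟪V i - V k, W i⟫_ℝ := by
    rw [Finset.sum_comm]
    simp only [← Finset.sum_neg_distrib]
    refine Finset.sum_congr rfl fun i _ ↦ Finset.sum_congr rfl fun k _ ↦ ?_
    rw [hB.apply i k, ← neg_sub (V i) (V k), inner_neg_left, mul_neg]
  simp only [inner_sub_right, mul_sub, Finset.sum_sub_distrib]
  rw [expand, swap]
  ring

lemma hasDerivAt_dirichletEnergy {B : Matrix ι ι ℝ} (hB : B.IsSymm) {V : ℝ → ι → E} {V' : ι → E}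
    {x : ℝ} (hV : HasDerivAt V V' x) :
    HasDerivAt (fun t ↦ dirichletEnergy B (V t))
      (∑ i, ⟪weightedLaplacian B (V x) i, V' i⟫_ℝ) x := by
  have hV_apply := hasDerivAt_pi.mp hV
  have hsum := (HasDerivAt.fun_sum fun i (_ : i ∈ Finset.univ) ↦
    HasDerivAt.fun_sum fun k (_ : k ∈ Finset.univ) ↦
      ((hV_apply i).sub (hV_apply k)).norm_sq.const_mul (B i k)).const_mul (1 / 4 : ℝ)
  refine hsum.congr_deriv ?_
  simp only [sum_inner_weightedLaplacian hB, mul_left_comm (B _ _) 2, ← Finset.mul_sum,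
    Pi.sub_apply]
  ring

end Dirichlet

section Network

open Complex

variable {ι : Type*}

/-- Internal voltage phasors `Eq i + Ed i * I`, turned by the rotor angles `δ i` from the
`dq`-frames of the individual machines into the common network frame. -/
noncomputable def networkVoltage (δ Ed Eq : ι → ℝ) (i : ι) : ℂ :=
  Complex.exp (δ i * I) * (Eq i + Ed i * I)

lemma norm_networkVoltage_sub_sq (δ Ed Eq : ι → ℝ) (i k : ι) :
    ‖networkVoltage δ Ed Eq i - networkVoltage δ Ed Eq k‖ ^ 2 =
      2 * (Ed i * Eq k - Ed k * Eq i) * Real.sin (δ i - δ k)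
        - 2 * (Ed i * Ed k + Eq i * Eq k) * Real.cos (δ i - δ k)
        + Ed i ^ 2 + Ed k ^ 2 + Eq i ^ 2 + Eq k ^ 2 := by
  simp only [networkVoltage, Complex.sq_norm, normSq_apply, sub_re, sub_im, mul_re, mul_im, add_re,
    add_im, exp_ofReal_mul_I_re, exp_ofReal_mul_I_im, ofReal_re, ofReal_im, I_re, I_im,
    Real.sin_sub, Real.cos_sub]
  linear_combination (Ed i ^ 2 + Eq i ^ 2) * Real.sin_sq_add_cos_sq (δ i) +
    (Ed k ^ 2 + Eq k ^ 2) * Real.sin_sq_add_cos_sq (δ k)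

lemma HL_eq_neg_dirichletEnergy {n : ℕ} (B : Matrix (Fin n) (Fin n) ℝ) (δ Ed Eq : Fin n → ℝ) :
    HL B δ Ed Eq = -dirichletEnergy B (networkVoltage δ Ed Eq) := by
  simp only [HL, dirichletEnergy, norm_networkVoltage_sub_sq, neg_mul]

lemma hasDerivAt_networkVoltage [Finite ι] (δ : ι → ℝ) {Ed Eq : ℝ → ι → ℝ} {Ed' Eq' : ι → ℝ}
    {x : ℝ} (hEd : HasDerivAt Ed Ed' x) (hEq : HasDerivAt Eq Eq' x) :
    HasDerivAt (fun t ↦ networkVoltage δ (Ed t) (Eq t)) (networkVoltage δ Ed' Eq') x := by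
  have := Fintype.ofFinite ι
  exact hasDerivAt_pi.mpr fun i ↦
    ((hasDerivAt_pi.mp hEq i).ofReal_comp.add
      ((hasDerivAt_pi.mp hEd i).ofReal_comp.mul_const I)).const_mul (Complex.exp (δ i * I))

variable [Fintype ι] [DecidableEq ι]

/-- The `d`-axis generator current `I_{di}`. The self-susceptance `B_{ii}` of the paper is the
sum of the off-diagonal entries of row `i`, whatever the diagonal of `B`. -/
noncomputable def dAxisCurrent (B : Matrix ι ι ℝ) (δ Ed Eq : ι → ℝ) (i : ι) : ℝ :=
  (∑ k ∈ Finset.univ.erase i, B i k) * Eq i -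
    ∑ k ∈ Finset.univ.erase i, B i k *
      (Ed k * Real.sin (δ i - δ k) + Eq k * Real.cos (δ i - δ k))

/-- The `q`-axis generator current `I_{qi}`, with `B_{ii}` encoded as in `dAxisCurrent`. -/
noncomputable def qAxisCurrent (B : Matrix ι ι ℝ) (δ Ed Eq : ι → ℝ) (i : ι) : ℝ :=
  -(∑ k ∈ Finset.univ.erase i, B i k) * Ed i -
    ∑ k ∈ Finset.univ.erase i, B i k *
      (Eq k * Real.sin (δ i - δ k) - Ed k * Real.cos (δ i - δ k))

lemma weightedLaplacian_networkVoltage (B : Matrix ι ι ℝ) (δ Ed Eq : ι → ℝ) (i : ι) :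
    weightedLaplacian B (networkVoltage δ Ed Eq) i =
      Complex.exp (δ i * I) * (-I * (qAxisCurrent B δ Ed Eq i + dAxisCurrent B δ Ed Eq i * I)) := by
  have exp_eq (k : ι) : Complex.exp (δ k * I) =
      Complex.exp (δ i * I) * (Real.cos (δ i - δ k) - Real.sin (δ i - δ k) * I) := by
    have angle_eq : δ k * I = δ i * I + (-(δ i - δ k) : ℂ) * I := by ring
    rw [angle_eq, Complex.exp_add, exp_mul_I (-_), Complex.cos_neg, Complex.sin_neg]
    push_cast
    ring
  rw [weightedLaplacian, ← Finset.add_sum_erase _ _ (Finset.mem_univ i), sub_self, smul_zero,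
    zero_add]
  simp only [dAxisCurrent, qAxisCurrent, ofReal_sub, ofReal_neg, ofReal_mul, ofReal_sum,
    Finset.sum_mul, Finset.mul_sum, ← Finset.sum_neg_distrib, ← Finset.sum_sub_distrib,
    ← Finset.sum_add_distrib]
  refine Finset.sum_congr rfl fun k _ ↦ ?_
  rw [networkVoltage, networkVoltage, exp_eq k, real_smul]
  push_cast
  linear_combination Complex.exp (δ i * I) * B i k *
    (Eq i - Eq k * Complex.cos (δ i - δ k)) * I_sq

lemma inner_weightedLaplacian_networkVoltage (B : Matrix ι ι ℝ) (δ Ed Eq Ed' Eq' : ι → ℝ) (i : ι) :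
    ⟪weightedLaplacian B (networkVoltage δ Ed Eq) i, networkVoltage δ Ed' Eq' i⟫_ℝ =
      dAxisCurrent B δ Ed Eq i * Eq' i - qAxisCurrent B δ Ed Eq i * Ed' i := by
  have inner_exp_mul (z w : ℂ) :
      ⟪Complex.exp (δ i * I) * z, Complex.exp (δ i * I) * w⟫_ℝ = ⟪z, w⟫_ℝ :=
    (rotation (Circle.exp (δ i))).inner_map_map z w
  rw [weightedLaplacian_networkVoltage, networkVoltage, inner_exp_mul, Complex.inner]
  simp only [map_mul, map_neg, map_add, conj_I, conj_ofReal, mul_re, mul_im, add_re, add_im, neg_re,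
    neg_im, I_re, I_im, ofReal_re, ofReal_im]
  ring

end Network

lemma hasDerivAt_HL {n : ℕ} {B : Matrix (Fin n) (Fin n) ℝ} (hB : B.IsSymm) (δ : Fin n → ℝ)
    {Ed Eq : ℝ → Fin n → ℝ} {Ed' Eq' : Fin n → ℝ} {x : ℝ}
    (hEd : HasDerivAt Ed Ed' x) (hEq : HasDerivAt Eq Eq' x) :
    HasDerivAt (fun t ↦ HL B δ (Ed t) (Eq t))
      (∑ i, (qAxisCurrent B δ (Ed x) (Eq x) i * Ed' i -
        dAxisCurrent B δ (Ed x) (Eq x) i * Eq' i)) x := by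
  simp only [HL_eq_neg_dirichletEnergy]
  refine (hasDerivAt_dirichletEnergy hB (hasDerivAt_networkVoltage δ hEd hEq)).neg.congr_deriv ?_
  simp only [inner_weightedLaplacian_networkVoltage, ← Finset.sum_neg_distrib, neg_sub]

/-- The partial derivatives of the line energy `H_L` with respect to the
subtransient voltages `E''_{qi}` and `E''_{di}` equal `−I_{di}` and `I_{qi}`
respectively, where `I_{di}, I_{qi}` are the dq-axis generator currents and
`B_{ii} := Σ_{k≠i} B_{ik}`. -/
theorem stmt_8 (n : ℕ) (hn : 1 ≤ n) (B : Matrix (Fin n) (Fin n) ℝ) (hB : B.IsSymm)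
    (δ Ed Eq : Fin n → ℝ) (i : Fin n) :
    HasDerivAt (fun t : ℝ => HL B δ Ed (Function.update Eq i t))
      (-((∑ k ∈ Finset.univ.erase i, B i k) * Eq i -
          ∑ k ∈ Finset.univ.erase i, B i k *
            (Ed k * Real.sin (δ i - δ k) + Eq k * Real.cos (δ i - δ k))))
      (Eq i) ∧
    HasDerivAt (fun t : ℝ => HL B δ (Function.update Ed i t) Eq)
      (-(∑ k ∈ Finset.univ.erase i, B i k) * Ed i -
          ∑ k ∈ Finset.univ.erase i, B i k *
            (Eq k * Real.sin (δ i - δ k) - Ed k * Real.cos (δ i - δ k)))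
      (Ed i) := by
  constructor
  · have hEq := hasDerivAt_update Eq i (Eq i)
    refine (hasDerivAt_HL hB δ (hasDerivAt_const (Eq i) Ed) hEq).congr_deriv ?_
    simp [Pi.single_apply, dAxisCurrent]
  · have hEd := hasDerivAt_update Ed i (Ed i)
    refine (hasDerivAt_HL hB δ hEd (hasDerivAt_const (Ed i) Eq)).congr_deriv ?_
    simp [Pi.single_apply, qAxisCurrent]
end

section
/- Let Q ∈ ℝ^{n×n} be symmetric positive definite, K ∈ ℝ^{n×n} arbitrary, P_d ∈ ℝⁿ, and let L_c ∈ ℝ^{n×n} be symmetric positive semidefinite with kernel exactly the span of the all-ones vector 𝟙 (Laplacian of a connected weighted undirected communication graph). Suppose θ, ω ∈ ℝⁿ satisfy: (i) ω = ω*·𝟙 for some ω* ∈ ℝ; (ii) the controller steady-state equation 0 = −L_c·θ − Q⁻¹·ω; and (iii) the supply–demand balance 𝟙ᵀ(Q⁻¹θ − Kω) = 𝟙ᵀP_d. Then ω = 0 and the resulting power injection P_m := Q⁻¹θ − Kω equals the optimal dispatch P* := λ*·Q⁻¹𝟙 with λ* := (𝟙ᵀP_d)/(𝟙ᵀQ⁻¹𝟙);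 in particular P_m minimizes (1/2)PᵀQP over {P : 𝟙ᵀP = 𝟙ᵀP_d}. -/
/-!
Since `𝟙ᵀL_c = 0` and `ω ∈ span 𝟙`, pairing the steady-state equation with `ω` leaves only
`ωᵀQ⁻¹ω = 0`, so `ω = 0`. Then `L_cθ = 0`, whence `θ = c𝟙`, `P_m = c Q⁻¹𝟙`, and the balance
equation forces `c = λ*`. Now `Q P_m` is a multiple of `𝟙`, hence orthogonal to every direction
preserving the total supply, and convexity of the cost makes `P_m` a minimizer.
-/

open Matrix

/-- The all-ones vector in `ℝⁿ`. -/
def ones (n : ℕ) : Fin n → ℝ := fun _ => 1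

theorem vecMul_eq_mulVec_of_isSymm {ι R : Type*} [Fintype ι] [CommSemiring R]
    {A : Matrix ι ι R} (hA : A.IsSymm) (x : ι → R) : x ᵥ* A = A *ᵥ x := by
  rw [← mulVec_transpose, hA.eq]

theorem dotProduct_mulVec_comm_of_isSymm {ι R : Type*} [Fintype ι] [CommSemiring R]
    {A : Matrix ι ι R} (hA : A.IsSymm) (x y : ι → R) : x ⬝ᵥ A *ᵥ y = y ⬝ᵥ A *ᵥ x := by
  rw [dotProduct_mulVec, vecMul_eq_mulVec_of_isSymm hA, dotProduct_comm]

theorem eq_zero_of_mulVec_add_posDef_mulVec_eq_zero {ι κ R : Type*} [Fintype ι] [Fintype κ]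
    [Ring R] [PartialOrder R] [StarRing R] {L : Matrix ι κ R} {A : Matrix ι ι R} (hA : A.PosDef)
    {θ : κ → R} {ω : ι → R} (hω : star ω ᵥ* L = 0) (h : L *ᵥ θ + A *ᵥ ω = 0) : ω = 0 := by
  have hform : star ω ⬝ᵥ A *ᵥ ω = 0 :=
    calc star ω ⬝ᵥ A *ᵥ ω = star ω ⬝ᵥ (L *ᵥ θ + A *ᵥ ω) := by
          rw [dotProduct_add, dotProduct_mulVec _ L, hω, zero_dotProduct, zero_add]
      _ = 0 := by rw [h, dotProduct_zero]
  by_contra hne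
  exact (hA.dotProduct_mulVec_pos hne).ne' hform

section Dispatch

variable {ι : Type*} [Fintype ι] {Q : Matrix ι ι ℝ}

/-- The generation cost `(1/2)PᵀQP` of the power injection `P`. -/
noncomputable def generationCost (Q : Matrix ι ι ℝ) (P : ι → ℝ) : ℝ :=
  (1 / 2 : ℝ) * (P ⬝ᵥ Q *ᵥ P)

theorem generationCost_nonneg (hQ : Q.PosSemidef) (P : ι → ℝ) : 0 ≤ generationCost Q P :=
  mul_nonneg one_half_pos.le (by simpa only [star_trivial] using hQ.dotProduct_mulVec_nonneg P)

theorem generationCost_add (hQ : Q.IsSymm) (P D : ι → ℝ) :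
    generationCost Q (P + D) = generationCost Q P + D ⬝ᵥ Q *ᵥ P + generationCost Q D := by
  simp only [generationCost, mulVec_add, dotProduct_add, add_dotProduct,
    dotProduct_mulVec_comm_of_isSymm hQ P D]
  ring

theorem isMinOn_generationCost_of_mulVec_eq_smul (hQ : Q.PosSemidef) {u P : ι → ℝ} {c : ℝ}
    (hP : Q *ᵥ P = c • u) : IsMinOn (generationCost Q) {P' | u ⬝ᵥ P' = u ⬝ᵥ P} P := by
  refine isMinOn_iff.2 fun P' hP' => ?_
  have horth : (P' - P) ⬝ᵥ Q *ᵥ P = 0 := by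
    rw [hP, dotProduct_smul, dotProduct_comm, dotProduct_sub, Set.mem_ofPred_eq.mp hP', sub_self,
      smul_zero]
  calc generationCost Q P
      ≤ generationCost Q P + generationCost Q (P' - P) :=
        le_add_of_nonneg_right (generationCost_nonneg hQ _)
    _ = generationCost Q (P + (P' - P)) := by
        rw [generationCost_add (isHermitian_iff_isSymm.1 hQ.isHermitian), horth, add_zero]
    _ = generationCost Q P' := by rw [add_sub_cancel]

variable [DecidableEq ι]

/-- The optimal dispatch `P* = λ*·Q⁻¹u`, with multiplier `λ* = b/(uᵀQ⁻¹u)`, for the cost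
`(1/2)PᵀQP` under the supply constraint `uᵀP = b`. For `u = 0` it is the zero vector, whatever
the value of the quotient. -/
noncomputable def optimalDispatch (Q : Matrix ι ι ℝ) (u : ι → ℝ) (b : ℝ) : ι → ℝ :=
  (b / (u ⬝ᵥ Q⁻¹ *ᵥ u)) • Q⁻¹ *ᵥ u

theorem mulVec_optimalDispatch (hQ : IsUnit Q.det) (u : ι → ℝ) (b : ℝ) :
    Q *ᵥ optimalDispatch Q u b = (b / (u ⬝ᵥ Q⁻¹ *ᵥ u)) • u := by
  rw [optimalDispatch, mulVec_smul, mulVec_mulVec, mul_nonsing_inv Q hQ, one_mulVec]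

theorem optimalDispatch_dotProduct_smul_inv_mulVec (hQ : Q.PosDef) (u : ι → ℝ) (c : ℝ) :
    optimalDispatch Q u (u ⬝ᵥ c • Q⁻¹ *ᵥ u) = c • Q⁻¹ *ᵥ u := by
  obtain rfl | hu := eq_or_ne u 0
  · simp [optimalDispatch]
  · have hpos : 0 < u ⬝ᵥ Q⁻¹ *ᵥ u := by
      simpa only [star_trivial] using hQ.inv.dotProduct_mulVec_pos hu
    rw [optimalDispatch, dotProduct_smul, smul_eq_mul, mul_div_cancel_right₀ c hpos.ne']

end Dispatch

/-- The left kernel condition `hL` makes this cover weight-balanced directed communication graphs;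
general `u` replaces the total supply by a weighted one. -/
theorem stmt_16_general {ι : Type*} [Fintype ι] [DecidableEq ι] (Q K L : Matrix ι ι ℝ)
    (hQ : Q.PosDef) (u : ι → ℝ) (hL : u ᵥ* L = 0)
    (hker : ∀ x : ι → ℝ, L *ᵥ x = 0 → ∃ c : ℝ, x = c • u)
    (b : ℝ) (θ ω : ι → ℝ) (ωstar : ℝ) (hω : ω = ωstar • u)
    (hsteady : 0 = -(L *ᵥ θ) - Q⁻¹ *ᵥ ω)
    (hbalance : u ⬝ᵥ (Q⁻¹ *ᵥ θ - K *ᵥ ω) = b) :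
    ω = 0 ∧
    Q⁻¹ *ᵥ θ - K *ᵥ ω = optimalDispatch Q u b ∧
    IsMinOn (generationCost Q) {P | u ⬝ᵥ P = b} (Q⁻¹ *ᵥ θ - K *ᵥ ω) := by
  have hω_left : star ω ᵥ* L = 0 := by rw [star_trivial, hω, smul_vecMul, hL, smul_zero]
  have hω_zero : ω = 0 :=
    eq_zero_of_mulVec_add_posDef_mulVec_eq_zero hQ.inv hω_left (θ := θ) <| by
      rw [← neg_eq_zero, neg_add', ← hsteady]
  obtain ⟨c, rfl⟩ : ∃ c : ℝ, θ = c • u := hker θ <| by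
    simpa only [hω_zero, mulVec_zero, sub_zero, zero_eq_neg] using hsteady
  have hPm : Q⁻¹ *ᵥ (c • u) - K *ᵥ ω = optimalDispatch Q u b := by
    rw [← hbalance, hω_zero, mulVec_zero, sub_zero, mulVec_smul,
      optimalDispatch_dotProduct_smul_inv_mulVec hQ]
  refine ⟨hω_zero, hPm, ?_⟩
  rw [← hbalance, hPm]
  exact isMinOn_generationCost_of_mulVec_eq_smul hQ.posSemidef
    (mulVec_optimalDispatch hQ.det_pos.ne'.isUnit u b)

/-- Every closed-loop steady state of the distributed consensus controller
(`ω` equal across machines, `0 = −L_cθ − Q⁻¹ω`, supply–demand balance) has zero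
frequency deviation and yields the optimal dispatch `P* = λ*·Q⁻¹𝟙` with
`λ* = 𝟙ᵀP_d/(𝟙ᵀQ⁻¹𝟙)`, which minimizes `(1/2)PᵀQP` over `{P : 𝟙ᵀP = 𝟙ᵀP_d}`. -/
theorem stmt_16 {n : ℕ} (Q K Lc : Matrix (Fin n) (Fin n) ℝ)
    (hQ : Q.PosDef) (hLc : Lc.PosSemidef)
    (hker : ∀ x : Fin n → ℝ, Lc.mulVec x = 0 ↔ ∃ c : ℝ, x = c • ones n)
    (Pd θ ω : Fin n → ℝ) (ωstar : ℝ)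
    (hω : ω = ωstar • ones n)
    (hsteady : (0 : Fin n → ℝ) = -(Lc.mulVec θ) - Q⁻¹.mulVec ω)
    (hbalance : ones n ⬝ᵥ (Q⁻¹.mulVec θ - K.mulVec ω) = ones n ⬝ᵥ Pd) :
    ω = 0 ∧
    Q⁻¹.mulVec θ - K.mulVec ω =
      ((ones n ⬝ᵥ Pd) / (ones n ⬝ᵥ Q⁻¹.mulVec (ones n))) • Q⁻¹.mulVec (ones n) ∧
    ∀ P : Fin n → ℝ, ones n ⬝ᵥ P = ones n ⬝ᵥ Pd →
      (1 / 2 : ℝ) * ((Q⁻¹.mulVec θ - K.mulVec ω) ⬝ᵥ Q.mulVec (Q⁻¹.mulVec θ - K.mulVec ω)) ≤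
        (1 / 2 : ℝ) * (P ⬝ᵥ Q.mulVec P) := by
  have hL : ones n ᵥ* Lc = 0 :=
    (vecMul_eq_mulVec_of_isSymm (isHermitian_iff_isSymm.1 hLc.isHermitian) _).trans
      ((hker _).2 ⟨1, (one_smul ℝ _).symm⟩)
  exact stmt_16_general Q K Lc hQ (ones n) hL (fun x => (hker x).1) _ θ ω ωstar hω hsteady hbalance
end
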